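/- arXiv:1708.06718 — 3 statements merged into one kernel-verified Lean document; each statement's English description precedes it below -/
import Mathlib

section
/- Let G be a simple graph with finite vertex set V, equipped with a family of canonical paths (p_{s,t})_{(s,t) ∈ V × V}. Then for every set S ⊆ V one has Σ_{e ∈ δ(S)} φ(e) ≥ |S| · |V \ S|; in particular |δ(S)| · φ_max ≥ |S| · |V \ S|. -/
/-- The edge boundary `δ(S)` of a vertex set `S`: the set of edges of `G` with
exactly one endpoint in `S`. -/
noncomputable def edgeBoundary {V : Type*} [Fintype V] (G : SimpleGraph V)
    (S : Finset V) : Finset (Sym2 V) := by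
  classical exact G.edgeFinset.filter (fun e => ∃ a ∈ S, ∃ b ∉ S, e = s(a, b))

/-- Given a family of canonical paths `p`, `phi G p e` counts the ordered pairs
`(s, t)` whose canonical path uses the edge `e`. -/
noncomputable def phi {V : Type*} [Fintype V] (G : SimpleGraph V)
    (p : ∀ s t : V, G.Walk s t) (e : Sym2 V) : ℕ := by
  classical exact (Finset.univ.filter (fun st : V × V => e ∈ (p st.1 st.2).edges)).card

/-- `phiMax G p` is the maximum of `phi G p e` over all edges `e` of `G`. -/
noncomputable def phiMax {V : Type*} [Fintype V] (G : SimpleGraph V)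
    (p : ∀ s t : V, G.Walk s t) : ℕ := by
  classical exact G.edgeFinset.sup (phi G p)

/-!
A walk from a vertex of `S` to a vertex outside `S` crosses an edge of `δ(S)`. Hence each of the
`|S| · |V \ S|` pairs in `S × (V \ S)` is counted by `φ(e)` for at least one `e ∈ δ(S)`, and the
union bound over `e ∈ δ(S)` gives the inequality.
-/

section

variable {V : Type*} [Fintype V] {G : SimpleGraph V} {S : Finset V} {e : Sym2 V}

lemma mem_edgeBoundary :
    e ∈ edgeBoundary G S ↔ e ∈ G.edgeSet ∧ ∃ a ∈ S, ∃ b ∉ S, e = s(a, b) := by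
  simp only [edgeBoundary, Finset.mem_filter, SimpleGraph.mem_edgeFinset]

lemma exists_mem_edgeBoundary_mem_edges {s t : V} (w : G.Walk s t) (hs : s ∈ S) (ht : t ∉ S) :
    ∃ e ∈ edgeBoundary G S, e ∈ w.edges := by
  obtain ⟨d, hd, hfst, hsnd⟩ := w.exists_boundary_dart (S : Set V) hs ht
  exact ⟨d.edge, mem_edgeBoundary.2 ⟨d.edge_mem, d.fst, hfst, d.snd, hsnd, rfl⟩,
    List.mem_map_of_mem hd⟩

lemma phi_le_phiMax (p : ∀ s t : V, G.Walk s t) (he : e ∈ G.edgeSet) :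
    phi G p e ≤ phiMax G p := by
  classical
  exact Finset.le_sup (f := phi G p) (SimpleGraph.mem_edgeFinset.2 he)

lemma card_le_sum_phi (p : ∀ s t : V, G.Walk s t) {P : Finset (V × V)} {F : Finset (Sym2 V)}
    (hPF : ∀ st ∈ P, ∃ e ∈ F, e ∈ (p st.1 st.2).edges) :
    P.card ≤ ∑ e ∈ F, phi G p e := by
  classical
  let pairsUsing (e : Sym2 V) : Finset (V × V) := {st | e ∈ (p st.1 st.2).edges}
  have hcover : P ⊆ F.biUnion pairsUsing := fun st hst => by
    simpa only [pairsUsing, Finset.mem_biUnion, Finset.mem_filter_univ] using hPF st hst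
  calc
    P.card ≤ (F.biUnion pairsUsing).card := Finset.card_le_card hcover
    _ ≤ ∑ e ∈ F, (pairsUsing e).card := Finset.card_biUnion_le
    _ = ∑ e ∈ F, phi G p e := by simp only [pairsUsing, phi]

lemma sum_phi_le_card_mul_phiMax (p : ∀ s t : V, G.Walk s t) {F : Finset (Sym2 V)}
    (hF : ↑F ⊆ G.edgeSet) :
    ∑ e ∈ F, phi G p e ≤ F.card * phiMax G p :=
  Finset.sum_le_card_nsmul F _ _ fun _ he => phi_le_phiMax p (hF he)

end

/-- For a simple graph with finite vertex set equipped with canonical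
paths, for every `S ⊆ V` one has `Σ_{e ∈ δ(S)} φ(e) ≥ |S|·|V \ S|`; in particular
`|δ(S)| · φ_max ≥ |S|·|V \ S|`. -/
theorem sum_phi_edgeBoundary_ge {V : Type*} [Fintype V] [DecidableEq V]
    (G : SimpleGraph V) (p : ∀ s t : V, G.Walk s t) (S : Finset V) :
    S.card * Sᶜ.card ≤ ∑ e ∈ edgeBoundary G S, phi G p e ∧
    S.card * Sᶜ.card ≤ (edgeBoundary G S).card * phiMax G p := by
  have hsum : S.card * Sᶜ.card ≤ ∑ e ∈ edgeBoundary G S, phi G p e := by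
    rw [← Finset.card_product]
    refine card_le_sum_phi p fun st hst => ?_
    obtain ⟨hs, ht⟩ := Finset.mem_product.1 hst
    exact exists_mem_edgeBoundary_mem_edges _ hs (Finset.mem_compl.1 ht)
  exact ⟨hsum, hsum.trans (sum_phi_le_card_mul_phiMax p fun _ he => (mem_edgeBoundary.1 he).1)⟩
end

section
/- For every real constant 0 < c < 1/3 there exist a real constant K > 0 and a sequence of 4-regular simple graphs (G_m)_{m ≥ 6}, where G_m has n_m = (6m − 12) · 2^m vertices, such that for every m ≥ 6: every separator (A, B, C) of G_m with separation constant c has size |C| ≥ n_m/(K · log n_m), and moreover G_m admits a partition (A, B, C) of its vertex set with no edge joining A to B, |A| ≥ n_m/3, |B| ≥ n_m/3, and |C| ≤ K · n_m/ log n_m. In particular, the smallest separators of G_m have size Θ(n_m / log n_m). -/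
/-!
The graphs are wrapped butterflies with `k = 6m - 12` levels: a vertex is a binary word of length
`m` together with a level in `ZMod k`, and an edge moves one level up while possibly changing the
one letter which that level controls. Since `m ≤ k`, one full turn around the levels can rewrite
every letter.

*Lower bound.* Route from `(x, i)` to `(y, j)` by going up once around, copying the letters of `y`,
and then on up to level `j`. After `s` steps the current word has some of its letters from `y` and
the others from `x`, so that it and the word made of the discarded letters determine `x` and `y`.
Hence, of the `n²` routes between the `n` vertices, at most `n` visit a given vertex at time `s`,
and at most `2kn` visit it at all. Every route from `A` to `B` meets `C`, so `|A||B| ≤ 2kn|C|`,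
and `k = O(log n)`.

*Upper bound.* Removing two opposite levels, that is `2n/k` vertices, leaves two parts of equal
size.
-/

/-- A vertex separation of `G`: the separator `C` splits the other vertices into two parts `A` and
`B` with no edge between them. The sizes of `A` and `B` are not part of the notion. -/
structure IsVertexSeparation {V : Type*} (G : SimpleGraph V) (A B C : Set V) : Prop where
  disjoint_left_right : Disjoint A B
  disjoint_left_separator : Disjoint A C
  disjoint_right_separator : Disjoint B C
  union_eq_univ : A ∪ B ∪ C = Set.univ
  not_adj : ∀ a ∈ A, ∀ b ∈ B, ¬ G.Adj a b

section Routing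

open Finset

variable {V : Type*} {G : SimpleGraph V} {A B C : Set V}

theorem IsVertexSeparation.exists_mem_support (h : IsVertexSeparation G A B C) {a b : V}
    (ha : a ∈ A) (hb : b ∈ B) (p : G.Walk a b) : ∃ v ∈ p.support, v ∈ C := by
  obtain ⟨d, hd, hfst, hsnd⟩ :=
    p.exists_boundary_dart A ha (h.disjoint_left_right.notMem_of_mem_right hb)
  refine ⟨d.snd, p.dart_snd_mem_support_of_mem_darts hd, ?_⟩
  have hcover : d.snd ∈ A ∪ B ∪ C := h.union_eq_univ ▸ Set.mem_univ _
  rcases hcover with (hA | hB) | hC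
  · exact absurd hA hsnd
  · exact absurd d.adj (h.not_adj _ hfst _ hB)
  · exact hC

theorem IsVertexSeparation.ncard_mul_ncard_le [Finite V] (h : IsVertexSeparation G A B C)
    (route : ∀ a b, G.Walk a b) {M : ℕ}
    (hM : ∀ v, {p : V × V | v ∈ (route p.1 p.2).support}.ncard ≤ M) :
    A.ncard * B.ncard ≤ M * C.ncard := by
  classical
  have := Fintype.ofFinite V
  have hmeet : ∀ p : V × V, ∃ v, p ∈ A ×ˢ B → v ∈ (route p.1 p.2).support ∧ v ∈ C := by
    intro p
    by_cases hp : p ∈ A ×ˢ B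
    · obtain ⟨v, hv⟩ := h.exists_mem_support hp.1 hp.2 (route p.1 p.2)
      exact ⟨v, fun _ => hv⟩
    · exact ⟨p.1, fun hp' => absurd hp' hp⟩
  choose meet hmeet using hmeet
  have hfibre : ∀ v ∈ C.toFinset, #{p ∈ (A ×ˢ B).toFinset | meet p = v} ≤ M := by
    intro v _
    rw [← Set.ncard_coe_finset]
    refine (Set.ncard_le_ncard fun p hp => ?_).trans (hM v)
    obtain ⟨hpAB, rfl⟩ : p ∈ A ×ˢ B ∧ meet p = v := by simpa using hp
    exact (hmeet p hpAB).1
  rw [← Set.ncard_prod, Set.ncard_eq_toFinset_card', Set.ncard_eq_toFinset_card' C]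
  exact card_le_mul_card_image_of_maps_to
    (fun p hp => Set.mem_toFinset.2 (hmeet p (Set.mem_toFinset.1 hp)).2) M hfibre

theorem exists_walk_forall_mem_support {f : ℕ → V} (hf : ∀ s, G.Adj (f s) (f (s + 1))) (ℓ : ℕ) :
    ∃ p : G.Walk (f 0) (f ℓ), ∀ v ∈ p.support, ∃ s ≤ ℓ, f s = v := by
  induction ℓ with
  | zero => exact ⟨.nil, by simp⟩
  | succ ℓ ih =>
    obtain ⟨p, hp⟩ := ih
    refine ⟨p.concat (hf ℓ), fun v hv => ?_⟩
    rw [SimpleGraph.Walk.support_concat, List.mem_append, List.mem_singleton] at hv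
    rcases hv with hv | rfl
    · obtain ⟨s, hs, rfl⟩ := hp v hv
      exact ⟨s, by lia, rfl⟩
    · exact ⟨ℓ + 1, le_rfl, rfl⟩

end Routing

section Butterfly

open Function Finset

variable {ι α : Type*} [DecidableEq ι] {k : ℕ}

/-- An upward edge of the wrapped butterfly: the level increases by one, and only the letter at the
position `pos i` controlled by the level `i` that is being left may change. -/
def IsButterflyStep (pos : ZMod k → ι) (u v : (ι → α) × ZMod k) : Prop :=
  ∃ b, v = (update u.1 (pos u.2) b, u.2 + 1)

theorem isButterflyStep_iff_eq_sub_one {pos : ZMod k → ι} {u v : (ι → α) × ZMod k} :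
    IsButterflyStep pos u v ↔ ∃ b, u = (update v.1 (pos (v.2 - 1)) b, v.2 - 1) := by
  constructor
  · rintro ⟨b, rfl⟩
    exact ⟨u.1 (pos u.2), by simp⟩
  · rintro ⟨b, rfl⟩
    exact ⟨v.1 (pos (v.2 - 1)), by simp⟩

/-- The wrapped butterfly graph with `k` cyclically arranged levels on words over the alphabet `α`,
whose letters are indexed by `ι`. The classical wrapped butterfly is the case where `pos` is a
bijection. -/
def butterflyGraph (α : Type*) (pos : ZMod k → ι) : SimpleGraph ((ι → α) × ZMod k) :=
  SimpleGraph.fromRel (IsButterflyStep pos)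

theorem butterflyGraph_adj [Nontrivial (ZMod k)] {pos : ZMod k → ι} {u v : (ι → α) × ZMod k} :
    (butterflyGraph α pos).Adj u v ↔ IsButterflyStep pos u v ∨ IsButterflyStep pos v u := by
  have step_ne : ∀ {u v : (ι → α) × ZMod k}, IsButterflyStep pos u v → u ≠ v := by
    rintro u _ ⟨b, rfl⟩ huv
    simpa using congrArg Prod.snd huv
  rw [butterflyGraph, SimpleGraph.fromRel_adj, and_iff_right_iff_imp]
  exact fun h => h.elim step_ne fun h => (step_ne h).symm

theorem butterflyGraph_neighborSet [Nontrivial (ZMod k)] (pos : ZMod k → ι)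
    (v : (ι → α) × ZMod k) :
    (butterflyGraph α pos).neighborSet v =
      Set.range (fun b => (update v.1 (pos v.2) b, v.2 + 1)) ∪
        Set.range (fun b => (update v.1 (pos (v.2 - 1)) b, v.2 - 1)) := by
  ext u
  rw [SimpleGraph.mem_neighborSet, butterflyGraph_adj, isButterflyStep_iff_eq_sub_one (u := u)]
  simp only [IsButterflyStep, Set.mem_union, Set.mem_range, eq_comm]

theorem card_butterflyGraph_neighborSet [Finite α] [Fact (2 < k)] (pos : ZMod k → ι)
    (v : (ι → α) × ZMod k) :
    Nat.card ((butterflyGraph α pos).neighborSet v) = 2 * Nat.card α := by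
  have : Nontrivial (ZMod k) := ⟨-1, 1, ZMod.neg_one_ne_one⟩
  have update_injective (i : ι) (j : ZMod k) : Injective fun b : α => (update v.1 i b, j) :=
    fun _ _ h => Function.update_injective v.1 i (congrArg Prod.fst h)
  rw [Nat.card_coe_set_eq, butterflyGraph_neighborSet, Set.ncard_union_eq,
    Set.ncard_range_of_injective (update_injective _ _),
    Set.ncard_range_of_injective (update_injective _ _), two_mul]
  rw [Set.disjoint_left]
  rintro _ ⟨b, rfl⟩ ⟨b', h⟩
  have hlevel : v.2 + -1 = v.2 + 1 := by simpa [sub_eq_add_neg] using congrArg Prod.snd h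
  exact ZMod.neg_one_ne_one (add_left_cancel hlevel)

/-- The positions controlled by the `s` levels starting at `i`. -/
def sweptPositions (pos : ZMod k → ι) (i : ZMod k) (s : ℕ) : Finset ι :=
  (range s).image fun t : ℕ => pos (i + (t : ZMod k))

theorem sweptPositions_succ (pos : ZMod k → ι) (i : ZMod k) (s : ℕ) :
    sweptPositions pos i (s + 1) = insert (pos (i + s)) (sweptPositions pos i s) := by
  simp only [sweptPositions, range_add_one, image_insert]

theorem sweptPositions_eq_univ [Fintype ι] [NeZero k] {pos : ZMod k → ι} (hpos : Surjective pos)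
    (i : ZMod k) {s : ℕ} (hs : k ≤ s) : sweptPositions pos i s = univ := by
  refine eq_univ_of_forall fun x => ?_
  obtain ⟨j, rfl⟩ := hpos x
  exact mem_image.2 ⟨(j - i).val, mem_range.2 ((ZMod.val_lt _).trans_le hs), by simp⟩

/-- The vertex reached after `s` steps of the upward route from `u` to `v`, which gives each letter
its value in `v` the first time that the letter is controlled. -/
def butterflyRoute (pos : ZMod k → ι) (u v : (ι → α) × ZMod k) (s : ℕ) : (ι → α) × ZMod k :=
  ((sweptPositions pos u.2 s).piecewise v.1 u.1, u.2 + s)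

theorem butterflyRoute_zero (pos : ZMod k → ι) (u v : (ι → α) × ZMod k) :
    butterflyRoute pos u v 0 = u := by
  rw [butterflyRoute, sweptPositions, range_zero, image_empty, piecewise_empty, Nat.cast_zero,
    add_zero]

theorem butterflyRoute_adj [Nontrivial (ZMod k)] (pos : ZMod k → ι) (u v : (ι → α) × ZMod k)
    (s : ℕ) :
    (butterflyGraph α pos).Adj (butterflyRoute pos u v s) (butterflyRoute pos u v (s + 1)) := by
  refine butterflyGraph_adj.2 (Or.inl ⟨v.1 (pos (u.2 + s)), ?_⟩)
  rw [butterflyRoute, sweptPositions_succ, piecewise_insert, Nat.cast_succ, ← add_assoc]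
  rfl

theorem butterflyRoute_add_val [Finite ι] [NeZero k] {pos : ZMod k → ι} (hpos : Surjective pos)
    (u v : (ι → α) × ZMod k) : butterflyRoute pos u v (k + (v.2 - u.2).val) = v := by
  have := Fintype.ofFinite ι
  rw [butterflyRoute, sweptPositions_eq_univ hpos u.2 (Nat.le_add_right k _), piecewise_univ]
  simp

theorem piecewise_piecewise_swap (S : Finset ι) (x y : ι → α) :
    S.piecewise (S.piecewise x y) (S.piecewise y x) = x := by
  rw [piecewise_idem_left, piecewise_idem_right, piecewise_same]

theorem ncard_butterflyRoute_eq_le [Finite ι] [Finite α] [NeZero k] (pos : ZMod k → ι) (s : ℕ)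
    (w : (ι → α) × ZMod k) :
    {p : ((ι → α) × ZMod k) × ((ι → α) × ZMod k) | butterflyRoute pos p.1 p.2 s = w}.ncard ≤
      Nat.card ((ι → α) × ZMod k) := by
  -- The start level of a route at `w` after `s` steps is `w.2 - s`, so `w` and `s` determine which
  -- letters have been swept. The map below keeps the letters missing from `w`.
  let S : Finset ι := sweptPositions pos (w.2 - s) s
  rw [← Set.ncard_univ]
  refine Set.ncard_le_ncard_of_injOn (fun p => (S.piecewise p.1.1 p.2.1, p.2.2))
    (fun _ _ => Set.mem_univ _) ?_
  have recover : ∀ x y i j, butterflyRoute pos (x, i) (y, j) s = w →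
      x = S.piecewise (S.piecewise x y) w.1 ∧ y = S.piecewise w.1 (S.piecewise x y) ∧
        i = w.2 - s := by
    rintro x y i j rfl
    have hS : S = sweptPositions pos i s := by simp [S, butterflyRoute]
    rw [hS]
    exact ⟨(piecewise_piecewise_swap _ x y).symm, (piecewise_piecewise_swap _ y x).symm,
      by simp [butterflyRoute]⟩
  rintro ⟨⟨x, i⟩, y, j⟩ hp ⟨⟨x', i'⟩, y', j'⟩ hq hpq
  obtain ⟨hx, hy, hi⟩ := recover x y i j hp
  obtain ⟨hx', hy', hi'⟩ := recover x' y' i' j' hq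
  obtain ⟨hword, rfl⟩ : S.piecewise x y = S.piecewise x' y' ∧ j = j' := by simpa using hpq
  exact Prod.ext
    (Prod.ext (by rw [hx, hword, ← hx']) (hi.trans hi'.symm))
    (Prod.ext (by rw [hy, hword, ← hy']) rfl)

theorem exists_walk_forall_mem_support_butterflyRoute [Finite ι] [NeZero k] [Nontrivial (ZMod k)]
    {pos : ZMod k → ι} (hpos : Surjective pos) (u v : (ι → α) × ZMod k) :
    ∃ p : (butterflyGraph α pos).Walk u v,
      ∀ w ∈ p.support, ∃ s < 2 * k, butterflyRoute pos u v s = w := by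
  obtain ⟨p, hp⟩ := exists_walk_forall_mem_support (butterflyRoute_adj pos u v)
    (k + (v.2 - u.2).val)
  refine ⟨p.copy (butterflyRoute_zero pos u v) (butterflyRoute_add_val hpos u v), fun w hw => ?_⟩
  obtain ⟨s, hs, rfl⟩ := hp w (by simpa using hw)
  have hlt := ZMod.val_lt (v.2 - u.2)
  exact ⟨s, by lia, rfl⟩

theorem IsVertexSeparation.ncard_mul_ncard_le_of_butterflyGraph [Finite ι] [Finite α] [NeZero k]
    [Nontrivial (ZMod k)] {pos : ZMod k → ι} (hpos : Surjective pos)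
    {A B C : Set ((ι → α) × ZMod k)} (h : IsVertexSeparation (butterflyGraph α pos) A B C) :
    A.ncard * B.ncard ≤ 2 * k * Nat.card ((ι → α) × ZMod k) * C.ncard := by
  choose route hroute using
    exists_walk_forall_mem_support_butterflyRoute (α := α) hpos
  refine h.ncard_mul_ncard_le route fun w => ?_
  calc {p : ((ι → α) × ZMod k) × ((ι → α) × ZMod k) | w ∈ (route p.1 p.2).support}.ncard
      ≤ (⋃ s ∈ range (2 * k), {p : ((ι → α) × ZMod k) × ((ι → α) × ZMod k) |
          butterflyRoute pos p.1 p.2 s = w}).ncard := by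
        refine Set.ncard_le_ncard fun p hp => ?_
        obtain ⟨s, hs, hsw⟩ := hroute p.1 p.2 w hp
        exact Set.mem_biUnion (mem_coe.2 (mem_range.2 hs)) hsw
    _ ≤ ∑ s ∈ range (2 * k), {p : ((ι → α) × ZMod k) × ((ι → α) × ZMod k) |
          butterflyRoute pos p.1 p.2 s = w}.ncard := set_ncard_biUnion_le _ _
    _ ≤ ∑ _s ∈ range (2 * k), Nat.card ((ι → α) × ZMod k) :=
        sum_le_sum fun s _ => ncard_butterflyRoute_eq_le pos s w
    _ = 2 * k * Nat.card ((ι → α) × ZMod k) := by rw [sum_const, card_range, smul_eq_mul]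

theorem IsVertexSeparation.sq_mul_card_le_of_butterflyGraph [Finite ι] [Finite α] [NeZero k]
    [Nontrivial (ZMod k)] {pos : ZMod k → ι} (hpos : Surjective pos)
    {A B C : Set ((ι → α) × ZMod k)} (h : IsVertexSeparation (butterflyGraph α pos) A B C)
    {c : ℝ} (hc : 0 ≤ c) (hA : c * Nat.card ((ι → α) × ZMod k) ≤ A.ncard)
    (hB : c * Nat.card ((ι → α) × ZMod k) ≤ B.ncard) :
    c ^ 2 * Nat.card ((ι → α) × ZMod k) ≤ 2 * k * C.ncard := by
  have hcard := h.ncard_mul_ncard_le_of_butterflyGraph hpos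
  generalize Nat.card ((ι → α) × ZMod k) = n at *
  rcases n.eq_zero_or_pos with rfl | hn
  · rw [Nat.cast_zero, mul_zero]
    positivity
  refine le_of_mul_le_mul_right ?_ (Nat.cast_pos.2 hn : (0 : ℝ) < n)
  calc c ^ 2 * n * n = (c * n) * (c * n) := by ring
    _ ≤ A.ncard * B.ncard := by gcongr
    _ ≤ 2 * k * n * C.ncard := by exact_mod_cast hcard
    _ = 2 * k * C.ncard * n := by ring

/-- The vertices of a butterfly graph whose level, represented in `[0, k)`, lies in `S`. -/
def butterflyLevels (ι α : Type*) (k : ℕ) (S : Set ℕ) : Set ((ι → α) × ZMod k) :=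
  {v | v.2.val ∈ S}

theorem ncard_butterflyLevels (ι α : Type*) [NeZero k] {S : Set ℕ} (hS : S ⊆ Set.Iio k) :
    (butterflyLevels ι α k S).ncard = Nat.card (ι → α) * S.ncard := by
  have hprod : butterflyLevels ι α k S = Set.univ ×ˢ (ZMod.val ⁻¹' S) := by
    ext
    simp [butterflyLevels]
  rw [hprod, Set.ncard_prod, Set.ncard_univ, Set.ncard_preimage_of_injective_subset_range
    (ZMod.val_injective k) fun i hi => ⟨i, ZMod.val_cast_of_lt (hS hi)⟩]

theorem zmod_val_add_one_eq_or_eq_zero [NeZero k] (i : ZMod k) :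
    (i + 1).val = i.val + 1 ∨ (i + 1).val = 0 := by
  have hi : i + 1 = ((i.val + 1 : ℕ) : ZMod k) := by simp
  rcases Nat.lt_or_ge (i.val + 1) k with h | h
  · exact .inl (by rw [hi, ZMod.val_cast_of_lt h])
  · have hk : i.val + 1 = k := (Nat.succ_le_of_lt (ZMod.val_lt i)).antisymm h
    exact .inr (by rw [hi, hk, ZMod.natCast_self, ZMod.val_zero])

theorem isVertexSeparation_butterflyLevels [NeZero k] (pos : ZMod k → ι) (h : ℕ) :
    IsVertexSeparation (butterflyGraph α pos) (butterflyLevels ι α k (Set.Ioo 0 h))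
      (butterflyLevels ι α k (Set.Ioo h k)) (butterflyLevels ι α k {0, h}) where
  disjoint_left_right := Disjoint.preimage _ (Set.disjoint_left.2 fun i => by simp; lia)
  disjoint_left_separator := Disjoint.preimage _ (Set.disjoint_left.2 fun i => by simp; lia)
  disjoint_right_separator := Disjoint.preimage _ (Set.disjoint_left.2 fun i => by simp; lia)
  union_eq_univ := by
    refine Set.eq_univ_of_forall fun v => ?_
    have := ZMod.val_lt v.2
    simp only [butterflyLevels, Set.mem_union, Set.mem_ofPred_eq, Set.mem_Ioo, Set.mem_insert_iff,
      Set.mem_singleton_iff]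
    lia
  not_adj := by
    rintro u ⟨hu0, huh⟩ v ⟨hvh, -⟩ ⟨-, ⟨b, rfl⟩ | ⟨b, rfl⟩⟩
    · have := zmod_val_add_one_eq_or_eq_zero u.2
      lia
    · have := zmod_val_add_one_eq_or_eq_zero v.2
      lia

end Butterfly

section Sequence

open Function

variable {m : ℕ}

theorem zmod_cast_surjective_of_le [NeZero m] {k : ℕ} (h : m ≤ k) :
    Surjective (ZMod.cast : ZMod k → ZMod m) := fun j =>
  ⟨(j.val : ZMod k), by
    have : NeZero k := ⟨by have := NeZero.pos m; lia⟩
    rw [ZMod.cast_eq_val, ZMod.val_cast_of_lt ((ZMod.val_lt j).trans_le h), ZMod.natCast_zmod_val]⟩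

/-- The graph `G_m`: the butterfly with `6m - 12` levels on binary words of length `m`, in which the
level with representative `i` in `[0, 6m - 12)` controls the letter at position `i mod m`. -/
def wrappedButterfly (m : ℕ) : SimpleGraph ((ZMod m → Bool) × ZMod (6 * m - 12)) :=
  butterflyGraph Bool ZMod.cast

theorem card_wrappedButterfly_vertices [NeZero m] :
    Nat.card ((ZMod m → Bool) × ZMod (6 * m - 12)) = (6 * m - 12) * 2 ^ m := by
  simp [mul_comm]

theorem card_wrappedButterfly_neighborSet (hm : 3 ≤ m)
    (v : (ZMod m → Bool) × ZMod (6 * m - 12)) :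
    Nat.card ((wrappedButterfly m).neighborSet v) = 4 := by
  have : Fact (2 < 6 * m - 12) := ⟨by lia⟩
  simpa [wrappedButterfly] using card_butterflyGraph_neighborSet (α := Bool) ZMod.cast v

theorem mul_log_two_le_log_card (hm : 3 ≤ m) :
    m * Real.log 2 ≤ Real.log (((6 * m - 12) * 2 ^ m : ℕ) : ℝ) := by
  rw [← Real.log_pow]
  refine Real.log_le_log (by positivity) ?_
  exact_mod_cast Nat.le_mul_of_pos_left (2 ^ m) (by lia : 0 < 6 * m - 12)

theorem log_card_pos (hm : 3 ≤ m) : 0 < Real.log (((6 * m - 12) * 2 ^ m : ℕ) : ℝ) :=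
  (mul_pos (by positivity) (Real.log_pos one_lt_two)).trans_le (mul_log_two_le_log_card hm)

theorem log_card_le (hm : 3 ≤ m) : Real.log (((6 * m - 12) * 2 ^ m : ℕ) : ℝ) ≤ 7 * m := by
  have hk : (0 : ℝ) < (6 * m - 12 : ℕ) := by exact_mod_cast (by lia : 0 < 6 * m - 12)
  have hk_le : ((6 * m - 12 : ℕ) : ℝ) ≤ 6 * m := by exact_mod_cast Nat.sub_le _ _
  calc Real.log (((6 * m - 12) * 2 ^ m : ℕ) : ℝ)
      = Real.log (6 * m - 12 : ℕ) + m * Real.log 2 := by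
        rw [Nat.cast_mul, Nat.cast_pow, Real.log_mul hk.ne' (by positivity), Real.log_pow,
          Nat.cast_ofNat]
    _ ≤ 6 * m + m * 1 := by
        gcongr
        · exact (Real.log_le_self hk.le).trans hk_le
        · exact Real.log_two_lt_d9.le.trans (by norm_num)
    _ = 7 * m := by ring

theorem IsVertexSeparation.div_log_le_ncard_of_wrappedButterfly (hm : 3 ≤ m) {c : ℝ} (hc : 0 < c)
    {A B C : Set ((ZMod m → Bool) × ZMod (6 * m - 12))}
    (h : IsVertexSeparation (wrappedButterfly m) A B C)
    (hA : c * (((6 * m - 12) * 2 ^ m : ℕ) : ℝ) ≤ A.ncard)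
    (hB : c * (((6 * m - 12) * 2 ^ m : ℕ) : ℝ) ≤ B.ncard) :
    (((6 * m - 12) * 2 ^ m : ℕ) : ℝ) /
      (12 / (c ^ 2 * Real.log 2) * Real.log (((6 * m - 12) * 2 ^ m : ℕ) : ℝ)) ≤ C.ncard := by
  have : NeZero m := ⟨by lia⟩
  have : NeZero (6 * m - 12) := ⟨by lia⟩
  have : Nontrivial (ZMod (6 * m - 12)) := ZMod.nontrivial_iff.2 (by lia)
  rw [← card_wrappedButterfly_vertices] at hA hB
  have hlevels : ((6 * m - 12 : ℕ) : ℝ) ≤ 6 * m := by exact_mod_cast Nat.sub_le _ _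
  have : 0 < Real.log 2 := Real.log_pos one_lt_two
  have hlog_card := log_card_pos hm
  have hsep : c ^ 2 * (((6 * m - 12) * 2 ^ m : ℕ) : ℝ) ≤ 12 * m * C.ncard := by
    rw [← card_wrappedButterfly_vertices]
    calc _ ≤ 2 * ((6 * m - 12 : ℕ) : ℝ) * C.ncard :=
          h.sq_mul_card_le_of_butterflyGraph (zmod_cast_surjective_of_le (by lia)) hc.le hA hB
      _ ≤ 2 * (6 * m) * C.ncard := by gcongr
      _ = 12 * m * C.ncard := by ring
  rw [div_le_iff₀ (by positivity)]
  calc (((6 * m - 12) * 2 ^ m : ℕ) : ℝ) ≤ 12 * m * C.ncard / c ^ 2 := by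
        rw [le_div_iff₀ (by positivity)]
        linarith
    _ = C.ncard * (12 / (c ^ 2 * Real.log 2) * (m * Real.log 2)) := by field_simp
    _ ≤ _ := by gcongr; exact mul_log_two_le_log_card hm

theorem exists_isVertexSeparation_wrappedButterfly (hm : 3 ≤ m) :
    ∃ A B C, IsVertexSeparation (wrappedButterfly m) A B C ∧
      (((6 * m - 12) * 2 ^ m : ℕ) : ℝ) / 3 ≤ A.ncard ∧
      (((6 * m - 12) * 2 ^ m : ℕ) : ℝ) / 3 ≤ B.ncard ∧
      (C.ncard : ℝ) ≤
        7 * (((6 * m - 12) * 2 ^ m : ℕ) : ℝ) / Real.log (((6 * m - 12) * 2 ^ m : ℕ) : ℝ) := by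
  have : NeZero m := ⟨by lia⟩
  have : NeZero (6 * m - 12) := ⟨by lia⟩
  have hlevels {S : Set ℕ} (hS : S ⊆ Set.Iio (6 * m - 12)) :
      (butterflyLevels (ZMod m) Bool (6 * m - 12) S).ncard = 2 ^ m * S.ncard := by
    simpa using ncard_butterflyLevels (ZMod m) Bool hS
  have hIoo {a b : ℕ} (hb : b ≤ 6 * m - 12) (hab : 3 * m - 7 ≤ b - a - 1) :
      (((6 * m - 12) * 2 ^ m : ℕ) : ℝ) / 3 ≤
        (butterflyLevels (ZMod m) Bool (6 * m - 12) (Set.Ioo a b)).ncard := by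
    rw [hlevels fun _ hi => hi.2.trans_le hb, Set.ncard_eq_toFinset_card', Set.toFinset_Ioo,
      Nat.card_Ioo, div_le_iff₀ three_pos]
    have hsize : 6 * m - 12 ≤ (b - a - 1) * 3 := by lia
    exact_mod_cast (Nat.mul_le_mul_right (2 ^ m) hsize).trans_eq (by ring)
  refine ⟨_, _, _, isVertexSeparation_butterflyLevels _ (3 * m - 6), hIoo (by lia) (by lia),
    hIoo le_rfl (by lia), ?_⟩
  have htwo : 2 * m ≤ 6 * m - 12 := by lia
  rw [hlevels (by rintro i (rfl | rfl) <;> simp <;> lia), Set.ncard_pair (by lia),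
    le_div_iff₀ (log_card_pos hm)]
  calc ((2 ^ m * 2 : ℕ) : ℝ) * Real.log (((6 * m - 12) * 2 ^ m : ℕ) : ℝ)
      ≤ ((2 ^ m * 2 : ℕ) : ℝ) * (7 * m) := by gcongr; exact log_card_le hm
    _ = ((7 * (2 * m * 2 ^ m) : ℕ) : ℝ) := by push_cast; ring
    _ ≤ ((7 * ((6 * m - 12) * 2 ^ m) : ℕ) : ℝ) := by gcongr
    _ = 7 * (((6 * m - 12) * 2 ^ m : ℕ) : ℝ) := by rw [Nat.cast_mul, Nat.cast_ofNat]

end Sequence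

theorem exists_graph_sequence_separators_theta_n_div_log_n_general :
    ∃ (V : ℕ → Type) (G : ∀ m, SimpleGraph (V m)), ∀ c : ℝ, 0 < c → ∃ K : ℝ, 0 < K ∧
      ∀ m : ℕ, 3 ≤ m →
        Finite (V m) ∧
        Nat.card (V m) = (6 * m - 12) * 2 ^ m ∧
        (∀ v : V m, Nat.card ((G m).neighborSet v) = 4) ∧
        (∀ A B C : Set (V m),
          Disjoint A B → Disjoint A C → Disjoint B C → A ∪ B ∪ C = Set.univ →
          c * (((6 * m - 12) * 2 ^ m : ℕ) : ℝ) ≤ A.ncard → A.ncard ≤ B.ncard →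
          (∀ a ∈ A, ∀ b ∈ B, ¬ (G m).Adj a b) →
          (((6 * m - 12) * 2 ^ m : ℕ) : ℝ) /
              (K * Real.log (((6 * m - 12) * 2 ^ m : ℕ) : ℝ)) ≤ C.ncard) ∧
        (∃ A B C : Set (V m),
          Disjoint A B ∧ Disjoint A C ∧ Disjoint B C ∧ A ∪ B ∪ C = Set.univ ∧
          (∀ a ∈ A, ∀ b ∈ B, ¬ (G m).Adj a b) ∧
          (((6 * m - 12) * 2 ^ m : ℕ) : ℝ) / 3 ≤ A.ncard ∧
          (((6 * m - 12) * 2 ^ m : ℕ) : ℝ) / 3 ≤ B.ncard ∧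
          (C.ncard : ℝ) ≤ K * (((6 * m - 12) * 2 ^ m : ℕ) : ℝ) /
              Real.log (((6 * m - 12) * 2 ^ m : ℕ) : ℝ)) := by
  refine ⟨_, wrappedButterfly, fun c hc => ?_⟩
  have : 0 < Real.log 2 := Real.log_pos one_lt_two
  have hlower : 0 < 12 / (c ^ 2 * Real.log 2) := by positivity
  refine ⟨12 / (c ^ 2 * Real.log 2) + 7, by positivity, fun m hm => ?_⟩
  have : NeZero m := ⟨by lia⟩
  have : NeZero (6 * m - 12) := ⟨by lia⟩
  have hlog_card := log_card_pos hm
  refine ⟨inferInstance, card_wrappedButterfly_vertices, card_wrappedButterfly_neighborSet hm,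
    ?_, ?_⟩
  · intro A B C hAB hAC hBC hcover hA hA_le hadj
    have h : IsVertexSeparation (wrappedButterfly m) A B C := ⟨hAB, hAC, hBC, hcover, hadj⟩
    refine le_trans ?_ (h.div_log_le_ncard_of_wrappedButterfly hm hc hA
      (hA.trans (by exact_mod_cast hA_le)))
    gcongr
    linarith
  · obtain ⟨A, B, C, ⟨hAB, hAC, hBC, hcover, hadj⟩, hA, hB, hC⟩ :=
      exists_isVertexSeparation_wrappedButterfly hm
    refine ⟨A, B, C, hAB, hAC, hBC, hcover, hadj, hA, hB, hC.trans ?_⟩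
    gcongr
    linarith

/-- For every `0 < c < 1/3` there are a constant `K > 0` and a
sequence of `4`-regular simple graphs `(G_m)_{m ≥ 6}` on
`n_m = (6m − 12)·2^m` vertices such that for every `m ≥ 6`: every separator
`(A, B, C)` of `G_m` with separation constant `c` has size
`|C| ≥ n_m/(K·log n_m)`, and `G_m` admits a partition `(A, B, C)` with no edge
joining `A` to `B`, `|A| ≥ n_m/3`, `|B| ≥ n_m/3` and `|C| ≤ K·n_m/log n_m`;
so the smallest separators of `G_m` have size `Θ(n_m/log n_m)`. -/
theorem exists_graph_sequence_separators_theta_n_div_log_n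
    (c : ℝ) (hc0 : 0 < c) (hc : c < 1 / 3) :
    ∃ K : ℝ, 0 < K ∧
    ∃ (V : ℕ → Type) (G : ∀ m, SimpleGraph (V m)),
      ∀ m : ℕ, 6 ≤ m →
        Finite (V m) ∧
        Nat.card (V m) = (6 * m - 12) * 2 ^ m ∧
        (∀ v : V m, Nat.card ((G m).neighborSet v) = 4) ∧
        (∀ A B C : Set (V m),
          Disjoint A B → Disjoint A C → Disjoint B C → A ∪ B ∪ C = Set.univ →
          c * (((6 * m - 12) * 2 ^ m : ℕ) : ℝ) ≤ A.ncard → A.ncard ≤ B.ncard →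
          (∀ a ∈ A, ∀ b ∈ B, ¬ (G m).Adj a b) →
          (((6 * m - 12) * 2 ^ m : ℕ) : ℝ) /
              (K * Real.log (((6 * m - 12) * 2 ^ m : ℕ) : ℝ)) ≤ C.ncard) ∧
        (∃ A B C : Set (V m),
          Disjoint A B ∧ Disjoint A C ∧ Disjoint B C ∧ A ∪ B ∪ C = Set.univ ∧
          (∀ a ∈ A, ∀ b ∈ B, ¬ (G m).Adj a b) ∧
          (((6 * m - 12) * 2 ^ m : ℕ) : ℝ) / 3 ≤ A.ncard ∧
          (((6 * m - 12) * 2 ^ m : ℕ) : ℝ) / 3 ≤ B.ncard ∧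
          (C.ncard : ℝ) ≤ K * (((6 * m - 12) * 2 ^ m : ℕ) : ℝ) /
              Real.log (((6 * m - 12) * 2 ^ m : ℕ) : ℝ)) := by
  obtain ⟨V, G, hG⟩ := exists_graph_sequence_separators_theta_n_div_log_n_general
  exact (hG c hc0).imp fun K hK => ⟨hK.1, V, G, fun m hm => hK.2 m (by lia)⟩
end

section
/- For every integer m ≥ 3 and every real constant 0 < c < 1/2, every separator (A, B, C) with separation constant c of the cube-connected cycles graph CCC_m on n = m · 2^m vertices satisfies 24m · |C| ≥ c · n; in particular all such separators have size Ω(n / log n). -/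
/-- The cube-connected cycles graph `CCC_m`: vertex set `{0,1}^m × ℤ/mℤ`, with
`(v, i)` adjacent to `(v, i+1)`, to `(v, i−1)`, and to `(v + e_i, i)`, where
`e_i` is the `i`-th standard basis vector (coordinates mod `2`, second
component mod `m`). -/
def CCC (m : ℕ) : SimpleGraph ((ZMod m → ZMod 2) × ZMod m) :=
  SimpleGraph.fromRel (fun x y =>
    (x.1 = y.1 ∧ y.2 = x.2 + 1) ∨ (x.2 = y.2 ∧ y.1 = x.1 + Pi.single x.2 1))

/-!
Equip the vertex set with its product group structure. For a set `s` of vertices, the number of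
points that a permutation pushes out of `s` is subadditive under composition, and it is at most the
size of the vertex boundary of `s` if the permutation moves every vertex along at most one edge.
A translation is a product of at most `3m` such permutations: walk once around the cycle, flipping
the prescribed coordinates on the way, and then walk on to the prescribed position.
So no translation pushes more than `3m |∂s|` points out of `s`, whereas on average over all
translations `|s| |sᶜ| / n` points leave `s`.
-/

open Finset
open scoped Pointwise

section Displacement

variable {G α : Type*} [Group G] [MulAction G α] [DecidableEq α]

lemma card_mul_smul_sdiff_le (g h : G) (s : Finset α) :
    #((g * h) • s \ s) ≤ #(g • s \ s) + #(h • s \ s) :=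
  calc #((g * h) • s \ s)
      ≤ #(((g * h) • s \ g • s) ∪ (g • s \ s)) := card_le_card (sdiff_triangle _ _ _)
    _ ≤ #((g * h) • s \ g • s) + #(g • s \ s) := card_union_le _ _
    _ = #(g • s \ s) + #(h • s \ s) := by
        rw [mul_smul, ← smul_finset_sdiff, card_smul_finset, add_comm]

lemma card_pow_smul_sdiff_le (g : G) (n : ℕ) (s : Finset α) :
    #(g ^ n • s \ s) ≤ n * #(g • s \ s) := by
  induction n with
  | zero => simp
  | succ n ih =>
    calc #(g ^ (n + 1) • s \ s)
        ≤ #(g ^ n • s \ s) + #(g • s \ s) := pow_succ g n ▸ card_mul_smul_sdiff_le _ _ s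
      _ ≤ (n + 1) * #(g • s \ s) := by rw [add_one_mul]; gcongr

end Displacement

lemma sum_card_vadd_inter {V : Type*} [AddGroup V] [Fintype V] [DecidableEq V] (s t : Finset V) :
    ∑ d : V, #((d +ᵥ s) ∩ t) = #s * #t := by
  have card_translates (y : V) : #{d : V | y ∈ d +ᵥ s} = #s := by
    refine card_equiv ((Equiv.neg V).trans (Equiv.addRight y)) fun d ↦ ?_
    simp [← neg_vadd_mem_iff]
  calc ∑ d : V, #((d +ᵥ s) ∩ t)
      = ∑ d : V, #{y ∈ t | y ∈ d +ᵥ s} := by simp only [filter_mem_eq_inter, inter_comm]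
    _ = ∑ y ∈ t, #{d : V | y ∈ d +ᵥ s} := sum_card_bipartiteAbove_eq_sum_card_bipartiteBelow _
    _ = #s * #t := by simp only [card_translates, sum_const, smul_eq_mul, mul_comm]

section OuterBoundary

variable {V : Type*} (G : SimpleGraph V)

open scoped Classical in
/-- The outer vertex boundary of `s` in `G`: the vertices outside `s` with a neighbour in `s`. -/
noncomputable def outerBoundary [Fintype V] (s : Finset V) : Finset V :=
  {b | b ∉ s ∧ ∃ a ∈ s, G.Adj a b}

/-- A permutation of the vertices moves along the edges of `G` if it sends every vertex to itself or
to a neighbour. -/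
def MovesAlongEdges (g : Equiv.Perm V) : Prop :=
  ∀ x, g x ≠ x → G.Adj x (g x)

variable {G}

lemma MovesAlongEdges.card_smul_sdiff_le [Fintype V] [DecidableEq V] {g : Equiv.Perm V}
    (hg : MovesAlongEdges G g) (s : Finset V) : #(g • s \ s) ≤ #(outerBoundary G s) := by
  refine card_le_card fun y hy ↦ ?_
  obtain ⟨hys, hy⟩ := mem_sdiff.1 hy
  obtain ⟨x, hx, rfl⟩ := mem_smul_finset.1 hys
  have hne : g x ≠ x := fun h ↦ hy (by rwa [Equiv.Perm.smul_def, h])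
  simpa [outerBoundary] using ⟨hy, x, hx, hg x hne⟩

end OuterBoundary

lemma sum_range_natCast_zmod {M : Type*} [AddCommMonoid M] (m : ℕ) [NeZero m] (f : ZMod m → M) :
    ∑ k ∈ range m, f k = ∑ j, f j :=
  sum_nbij' (fun k ↦ (k : ZMod m)) ZMod.val (by simp) (by simp [ZMod.val_lt])
    (fun _ hk ↦ ZMod.val_cast_of_lt (mem_range.1 hk)) (by simp) (by simp)

namespace CCC

/-- The permutation that moves every vertex one step forward along its cycle. -/
def rotate (m : ℕ) : Equiv.Perm ((ZMod m → ZMod 2) × ZMod m) :=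
  Equiv.addLeft (0, 1)

/-- The permutation that moves a vertex `(v, i)` along its cube edge exactly when `u i = 1`. -/
def flip {m : ℕ} (u : ZMod m → ZMod 2) : Equiv.Perm ((ZMod m → ZMod 2) × ZMod m) where
  toFun x := (x.1 + Pi.single x.2 (u x.2), x.2)
  invFun x := (x.1 - Pi.single x.2 (u x.2), x.2)
  left_inv x := by simp
  right_inv x := by simp

lemma movesAlongEdges_rotate (m : ℕ) : MovesAlongEdges (CCC m) (rotate m) := by
  intro x hx
  rw [CCC, SimpleGraph.fromRel_adj]
  exact ⟨hx.symm, .inl (.inl (by simp [rotate, add_comm]))⟩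

lemma movesAlongEdges_flip {m : ℕ} (u : ZMod m → ZMod 2) : MovesAlongEdges (CCC m) (flip u) := by
  intro x hx
  have hu₀ : u x.2 ≠ 0 := fun h ↦ hx (by simp [flip, h])
  have hu : u x.2 = 1 := Fin.eq_one_of_ne_zero _ hu₀
  rw [CCC, SimpleGraph.fromRel_adj]
  exact ⟨hx.symm, .inl (.inr (by simp [flip, hu]))⟩

lemma rotate_pow (m n : ℕ) : rotate m ^ n = Equiv.addLeft (0, (n : ZMod m)) := by
  simp [rotate]

lemma rotate_mul_flip_pow_apply {m : ℕ} (u : ZMod m → ZMod 2) (n : ℕ)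
    (x : (ZMod m → ZMod 2) × ZMod m) :
    ((rotate m * flip u) ^ n) x =
      (x.1 + ∑ k ∈ range n, Pi.single (x.2 + k) (u (x.2 + k)), x.2 + n) := by
  induction n with
  | zero => simp
  | succ n ih =>
    rw [pow_succ', Equiv.Perm.mul_apply, ih, sum_range_succ]
    simp [rotate, flip, add_assoc, add_comm (1 : ZMod m)]

variable {m : ℕ} [NeZero m]

lemma rotate_mul_flip_pow_self (u : ZMod m → ZMod 2) :
    (rotate m * flip u) ^ m = Equiv.addLeft (u, 0) := by
  ext1 x
  have sum_single : ∑ k ∈ range m, Pi.single (x.2 + k) (u (x.2 + k)) = u := by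
    let f (j : ZMod m) : ZMod m → ZMod 2 := Pi.single j (u j)
    calc ∑ k ∈ range m, f (x.2 + k)
        = ∑ j, f (x.2 + j) := sum_range_natCast_zmod m fun j ↦ f (x.2 + j)
      _ = ∑ j, f j := Equiv.sum_comp (Equiv.addLeft x.2) f
      _ = u := univ_sum_single u
  rw [rotate_mul_flip_pow_apply, sum_single]
  simp [Prod.ext_iff, add_comm]

lemma rotate_pow_mul_rotate_mul_flip_pow (d : (ZMod m → ZMod 2) × ZMod m) :
    rotate m ^ d.2.val * (rotate m * flip d.1) ^ m = Equiv.addLeft d := by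
  ext1 x
  simp [rotate_pow, rotate_mul_flip_pow_self, Prod.ext_iff]

lemma card_vadd_sdiff_le (d : (ZMod m → ZMod 2) × ZMod m)
    (s : Finset ((ZMod m → ZMod 2) × ZMod m)) :
    #((d +ᵥ s) \ s) ≤ 3 * m * #(outerBoundary (CCC m) s) := by
  have h_rotate := (movesAlongEdges_rotate m).card_smul_sdiff_le s
  have h_flip := (movesAlongEdges_flip d.1).card_smul_sdiff_le s
  set b := #(outerBoundary (CCC m) s)
  calc #((d +ᵥ s) \ s)
      = #((rotate m ^ d.2.val * (rotate m * flip d.1) ^ m) • s \ s) := by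
        rw [rotate_pow_mul_rotate_mul_flip_pow]; rfl
    _ ≤ #(rotate m ^ d.2.val • s \ s) + #((rotate m * flip d.1) ^ m • s \ s) :=
        card_mul_smul_sdiff_le _ _ s
    _ ≤ d.2.val * #(rotate m • s \ s) + m * #((rotate m * flip d.1) • s \ s) := by
        gcongr <;> exact card_pow_smul_sdiff_le _ _ s
    _ ≤ d.2.val * #(rotate m • s \ s) + m * (#(rotate m • s \ s) + #(flip d.1 • s \ s)) := by
        gcongr; exact card_mul_smul_sdiff_le _ _ s
    _ ≤ m * b + m * (b + b) := by gcongr; exact d.2.val_le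
    _ = 3 * m * b := by ring

variable (m) in
lemma card_vertices : Fintype.card ((ZMod m → ZMod 2) × ZMod m) = m * 2 ^ m := by
  simp [ZMod.card, mul_comm]

theorem card_mul_card_compl_le (s : Finset ((ZMod m → ZMod 2) × ZMod m)) :
    #s * #sᶜ ≤ m * 2 ^ m * (3 * m * #(outerBoundary (CCC m) s)) := by
  rw [← sum_card_vadd_inter, ← card_vertices, ← smul_eq_mul, ← card_univ]
  refine sum_le_card_nsmul _ _ _ fun d _ ↦ ?_
  rw [← sdiff_eq_inter_compl]
  exact card_vadd_sdiff_le d s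

end CCC

lemma outerBoundary_subset_of_separates {V : Type*} [Fintype V] {G : SimpleGraph V}
    {A B C : Finset V} (hcover : ∀ x, x ∈ A ∨ x ∈ B ∨ x ∈ C)
    (hsep : ∀ a ∈ A, ∀ b ∈ B, ¬ G.Adj a b) : outerBoundary G A ⊆ C := by
  intro b hb
  obtain ⟨hbA, a, ha, hab⟩ := by simpa [outerBoundary] using hb
  exact ((hcover b).resolve_left hbA).resolve_left fun hbB ↦ hsep a ha b hbB hab

theorem ccc_separator_lower_bound_general {m : ℕ} [NeZero m]
    (A B C : Set ((ZMod m → ZMod 2) × ZMod m)) (hAB : Disjoint A B)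
    (hcover : A ∪ B ∪ C = Set.univ) (hAleB : A.ncard ≤ B.ncard)
    (hsep : ∀ a ∈ A, ∀ b ∈ B, ¬ (CCC m).Adj a b) :
    A.ncard ≤ 6 * m * C.ncard := by
  lift A to Finset ((ZMod m → ZMod 2) × ZMod m) using A.toFinite
  lift B to Finset ((ZMod m → ZMod 2) × ZMod m) using B.toFinite
  lift C to Finset ((ZMod m → ZMod 2) × ZMod m) using C.toFinite
  simp only [Set.ncard_coe_finset, mem_coe, disjoint_coe] at hAB hAleB hsep ⊢
  have hboundary : #(outerBoundary (CCC m) A) ≤ #C :=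
    card_le_card (outerBoundary_subset_of_separates
      (fun x ↦ by simpa [or_assoc] using hcover.ge (Set.mem_univ x)) hsep)
  have hB : #B ≤ #Aᶜ := card_le_card (subset_compl_iff_disjoint_left.2 hAB)
  have half : m * 2 ^ m ≤ 2 * #Aᶜ := by
    rw [← CCC.card_vertices, ← card_add_card_compl A]
    lia
  have hpos : 0 < m * 2 ^ m := Nat.mul_pos (NeZero.pos m) (by positivity)
  refine Nat.le_of_mul_le_mul_left ?_ hpos
  calc m * 2 ^ m * #A ≤ 2 * #Aᶜ * #A := by gcongr
    _ = 2 * (#A * #Aᶜ) := by ring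
    _ ≤ 2 * (m * 2 ^ m * (3 * m * #(outerBoundary (CCC m) A))) :=
        Nat.mul_le_mul_left 2 (CCC.card_mul_card_compl_le A)
    _ ≤ 2 * (m * 2 ^ m * (3 * m * #C)) := by gcongr
    _ = m * 2 ^ m * (6 * m * #C) := by ring

/-- For `m ≥ 3` and `0 < c < 1/2`, every separator `(A, B, C)`
with separation constant `c` of `CCC_m` on `n = m·2^m` vertices satisfies
`24m·|C| ≥ c·n`; in particular all such separators have size `Ω(n/log n)`. -/
theorem ccc_separator_lower_bound (m : ℕ) (hm : 3 ≤ m)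
    (c : ℝ) (hc0 : 0 < c) (hc : c < 1 / 2)
    (A B C : Set ((ZMod m → ZMod 2) × ZMod m))
    (hAB : Disjoint A B) (hAC : Disjoint A C) (hBC : Disjoint B C)
    (hcover : A ∪ B ∪ C = Set.univ)
    (hA : c * ((m * 2 ^ m : ℕ) : ℝ) ≤ A.ncard) (hAleB : A.ncard ≤ B.ncard)
    (hsep : ∀ a ∈ A, ∀ b ∈ B, ¬ (CCC m).Adj a b) :
    c * ((m * 2 ^ m : ℕ) : ℝ) ≤ (24 * m * C.ncard : ℕ) := by
  have : NeZero m := ⟨by lia⟩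
  have h := ccc_separator_lower_bound_general A B C hAB hcover hAleB hsep
  exact hA.trans (by norm_cast; lia)
end
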